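/- In dimension n = 2k, define Ω^{(k)} by (Ω^{(k)})_i^j := Σ_{ℓ=0}^{k−1} 4^{k−ℓ} (1/(ℓ!(k−ℓ))) δ^{j j₁…j_{k+ℓ}}_{i i₁…i_{k+ℓ}} W_{j₁j₂}{}^{i₁i₂} ⋯ W_{j_{2ℓ−1}j_{2ℓ}}{}^{i_{2ℓ−1}i_{2ℓ}} P_{j_{2ℓ+1}}^{i_{2ℓ+1}} ⋯ P_{j_{k+ℓ}}^{i_{k+ℓ}}. Then tr Ω^{(k)} = Pf^{(k)}(Rm) − Pf^{(k)}(W), where Pf^{(k)}(A) := (1/k!) δ^{j₁…j_{2k}}_{i₁…i_{2k}} A_{j₁j₂}{}^{i₁i₂} ⋯ A_{j_{2k-1}j_{2k}}{}^{i_{2k-1}i_{2k}}. -/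

import Mathlib

open scoped BigOperators

noncomputable def kron {n : ℕ} (i j : Fin n) : ℝ := if i = j then 1 else 0

noncomputable def gdelta {n m : ℕ} (j i : Fin m → Fin n) : ℝ :=
  Matrix.det (Matrix.of fun a b => kron (j a) (i b))

def d0 {k : ℕ} (a : Fin k) : Fin (2 * k) := ⟨2 * a.val, by have := a.isLt; omega⟩
def d1 {k : ℕ} (a : Fin k) : Fin (2 * k) := ⟨2 * a.val + 1, by have := a.isLt; omega⟩

/-- `Pf^{(k)}(A)`. -/
noncomputable def PfA {n k : ℕ} (A : Fin n → Fin n → Fin n → Fin n → ℝ) : ℝ :=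
  (1 / (Nat.factorial k : ℝ)) *
    ∑ js : Fin (2 * k) → Fin n, ∑ is : Fin (2 * k) → Fin n,
      gdelta js is * ∏ a : Fin k, A (js (d0 a)) (js (d1 a)) (is (d0 a)) (is (d1 a))

/-- The tensor `(Ω^{(k)})_i^j = Σ_{ℓ=0}^{k−1} 4^{k−ℓ} (1/(ℓ!(k−ℓ)))
`δ^{j j₁…j_{k+ℓ}}_{i i₁…i_{k+ℓ}} W_{j₁j₂}{}^{i₁i₂} ⋯ W_{j_{2ℓ−1}j_{2ℓ}}{}^{i_{2ℓ−1}i_{2ℓ}}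
P_{j_{2ℓ+1}}^{i_{2ℓ+1}} ⋯ P_{j_{k+ℓ}}^{i_{k+ℓ}}` (orthonormal frame). -/
noncomputable def OmegaT {n k : ℕ} (W : Fin n → Fin n → Fin n → Fin n → ℝ)
    (P : Fin n → Fin n → ℝ) (i j : Fin n) : ℝ :=
  ∑ ℓ : Fin k, (4 : ℝ) ^ (k - ℓ.val) * (1 / ((Nat.factorial ℓ.val : ℝ) * ((k : ℝ) - (ℓ.val : ℝ)))) *
    ∑ js : Fin (k + ℓ.val) → Fin n, ∑ is : Fin (k + ℓ.val) → Fin n,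
      gdelta (Fin.cons j js) (Fin.cons i is) *
        (∏ a : Fin ℓ.val,
          W (js ⟨2 * a.val, by have := a.isLt; have := ℓ.isLt; omega⟩)
            (js ⟨2 * a.val + 1, by have := a.isLt; have := ℓ.isLt; omega⟩)
            (is ⟨2 * a.val, by have := a.isLt; have := ℓ.isLt; omega⟩)
            (is ⟨2 * a.val + 1, by have := a.isLt; have := ℓ.isLt; omega⟩)) *
        (∏ b : Fin (k - ℓ.val),
          P (js ⟨2 * ℓ.val + b.val, by have := b.isLt; have := ℓ.isLt; omega⟩)
            (is ⟨2 * ℓ.val + b.val, by have := b.isLt; have := ℓ.isLt; omega⟩))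

/-!
Contraction with the generalized Kronecker delta only sees the antisymmetrization of each factor.
Since `P ⩕ g` is the unnormalized antisymmetrization of `P ⊗ g`, it contributes like `4 P ⊗ g`, so
`Pf(W + P ⩕ g)` has a binomial expansion in contractions of `ℓ` factors `W` with `k - ℓ` factors
`P ⊗ g`. Contracting one factor `g` against a delta with `m` further slots gives the factor `n - m`,
the number of values that do not yet occur in an injective multi-index. In dimension `2k` the
`k - ℓ` factors `g` thus give `(k - ℓ)!`, and the single contraction in `tr Ω` gives `k - ℓ`.
-/

open Equiv (Perm)
open Equiv.Perm (sign)
open Finset (range)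
open scoped Nat

theorem cast_sign_mul_sign_mul_self {ι R : Type*} [Fintype ι] [DecidableEq ι] [CommRing R]
    (s t : Perm ι) : (sign s * sign t * (sign s * sign t) : R) = 1 := by
  rw [mul_mul_mul_comm]
  norm_cast
  simp only [Int.units_mul_self, mul_one, Units.val_one, Int.cast_one]

section MultiDelta

variable {ι ι' κ R : Type*} [Fintype ι] [DecidableEq ι] [Fintype ι'] [DecidableEq ι']
  [DecidableEq κ] [CommRing R]

/-- The generalized Kronecker delta `δ^j_i` for multi-indices labelled by an arbitrary finite
type `ι`, so that slots can be regrouped freely. -/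
def multiDelta (R : Type*) [CommRing R] (j i : ι → κ) : R :=
  ((1 : Matrix κ κ R).submatrix j i).det

theorem multiDelta_comp_equiv (e : ι ≃ ι') (j i : ι' → κ) :
    multiDelta R (j ∘ e) (i ∘ e) = multiDelta R j i :=
  Matrix.det_submatrix_equiv_self e ((1 : Matrix κ κ R).submatrix j i)

theorem multiDelta_comp_perm (s t : Perm ι) (j i : ι → κ) :
    multiDelta R (j ∘ s) (i ∘ t) = sign s * sign t * multiDelta R j i := by
  have rows := Matrix.det_permute s (((1 : Matrix κ κ R).submatrix j i).submatrix id t)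
  rw [Matrix.det_permute' t, ← mul_assoc] at rows
  exact rows

theorem multiDelta_eq_zero_of_not_injective {j : ι → κ} (hj : ¬ j.Injective) (i : ι → κ) :
    multiDelta R j i = 0 := by
  obtain ⟨a, b, hab, hne⟩ := Function.not_injective_iff.mp hj
  refine Matrix.det_zero_of_row_eq hne (funext fun c => ?_)
  rw [Matrix.submatrix_apply, Matrix.submatrix_apply, hab]

theorem multiDelta_sumElim_of_notMem_range {j : ι → κ} {c : κ} (hc : c ∉ Set.range j)
    (i : ι → κ) :
    multiDelta R (Sum.elim j fun _ : Unit => c) (Sum.elim i fun _ : Unit => c) =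
      multiDelta R j i := by
  have blocks : (1 : Matrix κ κ R).submatrix (Sum.elim j fun _ : Unit => c)
      (Sum.elim i fun _ : Unit => c) =
      Matrix.fromBlocks ((1 : Matrix κ κ R).submatrix j i) 0
        ((1 : Matrix κ κ R).submatrix (fun _ => c) i) 1 := by
    ext (a | a) (b | b)
    · rfl
    · exact Matrix.one_apply_ne fun h => hc ⟨a, h⟩
    · rfl
    · exact (Matrix.one_apply_eq c).trans (Matrix.one_apply_eq b).symm
  rw [multiDelta, blocks, Matrix.det_fromBlocks_zero₁₂, Matrix.det_one, mul_one, multiDelta]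

theorem sum_multiDelta_sumElim [Fintype κ] (j i : ι → κ) :
    ∑ c, multiDelta R (Sum.elim j fun _ : Unit => c) (Sum.elim i fun _ : Unit => c) =
      (Fintype.card κ - Fintype.card ι) * multiDelta R j i := by
  by_cases hj : j.Injective
  · have vanish : ∀ c ∈ Finset.univ.image j,
        multiDelta R (Sum.elim j fun _ : Unit => c) (Sum.elim i fun _ : Unit => c) = 0 := by
      intro c hc
      obtain ⟨a, -, rfl⟩ := Finset.mem_image.mp hc
      refine multiDelta_eq_zero_of_not_injective (fun h => ?_) _
      exact Sum.inl_ne_inr (h (a₁ := Sum.inl a) (a₂ := Sum.inr ()) rfl)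
    have survive : ∀ c ∈ (Finset.univ.image j)ᶜ,
        multiDelta R (Sum.elim j fun _ : Unit => c) (Sum.elim i fun _ : Unit => c) =
          multiDelta R j i :=
      fun c hc => multiDelta_sumElim_of_notMem_range (by simpa using hc) i
    have card_range : (Finset.univ.image j).card = Fintype.card ι :=
      Finset.card_image_of_injective _ hj
    rw [← Finset.sum_add_sum_compl (Finset.univ.image j), Finset.sum_eq_zero vanish, zero_add,
      Finset.sum_congr rfl survive, Finset.sum_const, nsmul_eq_mul, Finset.card_compl, card_range,
      Nat.cast_sub (Fintype.card_le_of_injective j hj)]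
  · have extended_not_injective (c : κ) : ¬ (Sum.elim j fun _ : Unit => c).Injective :=
      fun h => hj (h.comp Sum.inl_injective)
    simp only [multiDelta_eq_zero_of_not_injective hj,
      multiDelta_eq_zero_of_not_injective (extended_not_injective _), Finset.sum_const_zero,
      mul_zero]

end MultiDelta

section DeltaContraction

variable {ι ι' κ R : Type*} [Fintype ι] [DecidableEq ι] [Fintype ι'] [DecidableEq ι']
  [Fintype κ] [DecidableEq κ] [CommRing R]

/-- Components, in a frame labelled by `κ`, of a tensor whose lower and whose upper indices are
both labelled by `ι`. The lower multi-index is the first argument. -/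
abbrev MixedTensor (ι κ R : Type*) : Type _ := (ι → κ) → (ι → κ) → R

/-- The full contraction `δ^{j}_{i} T_j^i` of a tensor with the generalized Kronecker delta. -/
def deltaContraction : MixedTensor ι κ R →ₗ[R] R where
  toFun T := ∑ j, ∑ i, multiDelta R j i * T j i
  map_add' S T := by simp only [Pi.add_apply, mul_add, Finset.sum_add_distrib]
  map_smul' r T := by
    simp only [Pi.smul_apply, smul_eq_mul, mul_left_comm _ r, ← Finset.mul_sum, RingHom.id_apply]

theorem deltaContraction_apply (T : MixedTensor ι κ R) :
    deltaContraction T = ∑ j, ∑ i, multiDelta R j i * T j i :=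
  rfl

theorem deltaContraction_congr_equiv (e : ι ≃ ι') {T : MixedTensor ι κ R}
    {T' : MixedTensor ι' κ R} (h : ∀ j i, T' j i = T (j ∘ e) (i ∘ e)) :
    deltaContraction T' = deltaContraction T := by
  refine Fintype.sum_equiv (e.symm.arrowCongr (Equiv.refl κ)) _ _ fun j => ?_
  refine Fintype.sum_equiv (e.symm.arrowCongr (Equiv.refl κ)) _ _ fun i => ?_
  exact congrArg₂ _ (multiDelta_comp_equiv e j i).symm (h j i)

theorem deltaContraction_comp_perm (s t : Perm ι) (T : MixedTensor ι κ R) :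
    deltaContraction (fun j i => T (j ∘ s) (i ∘ t)) = sign s * sign t * deltaContraction T := by
  simp only [deltaContraction_apply, Finset.mul_sum]
  refine Fintype.sum_equiv (s.symm.arrowCongr (Equiv.refl κ)) _ _ fun j => ?_
  refine Fintype.sum_equiv (t.symm.arrowCongr (Equiv.refl κ)) _ _ fun i => ?_
  change _ = _ * (multiDelta R (j ∘ s) (i ∘ t) * T (j ∘ s) (i ∘ t))
  rw [multiDelta_comp_perm]
  linear_combination
    (-multiDelta R j i * T (j ∘ s) (i ∘ t)) * cast_sign_mul_sign_mul_self (R := R) s t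

end DeltaContraction

section Antisymmetrize

variable {ι σ κ R : Type*} [Fintype σ] [CommRing R]

/-- The tensor power `T ⊗ ⋯ ⊗ T` with factors labelled by `σ`; the index `i` of the factor `a`
becomes the index `(a, i)`. -/
def tensorPow (σ : Type*) [Fintype σ] (T : MixedTensor ι κ R) : MixedTensor (σ × ι) κ R :=
  fun x y => ∏ a, T (fun i => x (a, i)) (fun i => y (a, i))

theorem tensorPow_smul (r : R) (T : MixedTensor ι κ R) :
    tensorPow σ (r • T) = r ^ Fintype.card σ • tensorPow σ T := by
  ext x y
  simp [tensorPow, Finset.prod_mul_distrib]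

variable [Fintype ι] [DecidableEq ι]

/-- The sum of all signed permutations of the lower and of the upper indices of a tensor, without
the normalizing factor `1 / (ι!)²`. -/
def antisymmetrize : MixedTensor ι κ R →ₗ[R] MixedTensor ι κ R where
  toFun T x y := ∑ s : Perm ι, ∑ t : Perm ι, sign s * sign t * T (x ∘ s) (y ∘ t)
  map_add' S T := by
    ext x y
    simp only [Pi.add_apply, mul_add, Finset.sum_add_distrib]
  map_smul' r T := by
    ext x y
    simp only [Pi.smul_apply, smul_eq_mul, mul_left_comm _ r, ← Finset.mul_sum, RingHom.id_apply]

theorem antisymmetrize_apply (T : MixedTensor ι κ R) (x y : ι → κ) :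
    antisymmetrize T x y = ∑ s : Perm ι, ∑ t : Perm ι, sign s * sign t * T (x ∘ s) (y ∘ t) :=
  rfl

theorem antisymmetrize_apply_comp_perm (s t : Perm ι) (T : MixedTensor ι κ R) (x y : ι → κ) :
    antisymmetrize T (x ∘ s) (y ∘ t) = sign s * sign t * antisymmetrize T x y := by
  simp only [antisymmetrize_apply, Finset.mul_sum]
  refine Fintype.sum_equiv (Equiv.mulLeft s) _ _ fun s' => ?_
  refine Fintype.sum_equiv (Equiv.mulLeft t) _ _ fun t' => ?_
  simp only [Equiv.coe_mulLeft, map_mul, Units.val_mul, Int.cast_mul, Equiv.Perm.coe_mul,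
    Function.comp_assoc]
  linear_combination (-(sign s' : ℤ) * (sign t' : ℤ) * T (x ∘ s ∘ s') (y ∘ t ∘ t')) *
    cast_sign_mul_sign_mul_self (R := R) s t

theorem antisymmetrize_antisymmetrize (T : MixedTensor ι κ R) :
    antisymmetrize (antisymmetrize T) = ((Fintype.card ι)! ^ 2 : R) • antisymmetrize T := by
  ext x y
  have summand (s t : Perm ι) :
      (sign s * sign t * (sign s * sign t * antisymmetrize T x y) : R) = antisymmetrize T x y := by
    rw [← mul_assoc, cast_sign_mul_sign_mul_self, one_mul]
  rw [antisymmetrize_apply]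
  simp only [antisymmetrize_apply_comp_perm, summand, Finset.sum_const, Finset.card_univ,
    Fintype.card_perm, nsmul_eq_mul, Pi.smul_apply, smul_eq_mul]
  ring

theorem tensorPow_antisymmetrize [DecidableEq σ] (T : MixedTensor ι κ R) :
    tensorPow σ (antisymmetrize T) = ∑ f : σ → Perm ι × Perm ι, fun x y =>
      (sign (Equiv.prodCongrRight fun a => (f a).1) * sign (Equiv.prodCongrRight fun a => (f a).2) *
        tensorPow σ T (x ∘ Equiv.prodCongrRight fun a => (f a).1)
          (y ∘ Equiv.prodCongrRight fun a => (f a).2) : R) := by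
  ext x y
  simp only [tensorPow, antisymmetrize_apply, ← Fintype.sum_prod_type', Fintype.prod_sum,
    Finset.sum_apply, Finset.prod_mul_distrib, Equiv.Perm.sign_prodCongrRight, Units.coe_prod,
    Int.cast_prod]
  rfl

-- Every term of the expanded power is a signed permutation of the slots, and so is absorbed by
-- the generalized delta.
theorem deltaContraction_tensorPow_antisymmetrize [Fintype κ] [DecidableEq κ] [DecidableEq σ]
    (T : MixedTensor ι κ R) :
    deltaContraction (tensorPow σ (antisymmetrize T)) =
      ((Fintype.card ι)! ^ 2) ^ Fintype.card σ * deltaContraction (tensorPow σ T) := by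
  have summand (s t : Perm (σ × ι)) :
      deltaContraction (fun x y => (sign s * sign t * tensorPow σ T (x ∘ s) (y ∘ t) : R)) =
        deltaContraction (tensorPow σ T) := by
    have scaled := deltaContraction.map_smul (sign s * sign t : R)
      fun x y => tensorPow σ T (x ∘ s) (y ∘ t)
    rw [deltaContraction_comp_perm] at scaled
    rwa [smul_eq_mul, ← mul_assoc, cast_sign_mul_sign_mul_self, one_mul] at scaled
  rw [tensorPow_antisymmetrize, map_sum]
  simp only [summand, Finset.sum_const, Finset.card_univ, Fintype.card_fun, Fintype.card_prod,
    Fintype.card_perm, nsmul_eq_mul, ← sq, Nat.cast_pow]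

theorem deltaContraction_tensorPow_congr [Fintype κ] [DecidableEq κ] [DecidableEq σ]
    [IsDomain R] [CharZero R] {S T : MixedTensor ι κ R}
    (h : antisymmetrize S = antisymmetrize T) :
    deltaContraction (tensorPow σ S) = deltaContraction (tensorPow σ T) := by
  have factor_ne_zero : (((Fintype.card ι)! : R) ^ 2) ^ Fintype.card σ ≠ 0 :=
    pow_ne_zero _ (pow_ne_zero _ (Nat.cast_ne_zero.mpr (Nat.factorial_ne_zero _)))
  apply mul_left_cancel₀ factor_ne_zero
  rw [← deltaContraction_tensorPow_antisymmetrize, ← deltaContraction_tensorPow_antisymmetrize, h]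

end Antisymmetrize

section TensorMul

variable {ι ι' σ κ R : Type*} [CommRing R]

/-- The tensor product, whose slots are the disjoint union of those of the factors. -/
def tensorMul (S : MixedTensor ι κ R) (T : MixedTensor ι' κ R) : MixedTensor (ι ⊕ ι') κ R :=
  fun x y => S (x ∘ Sum.inl) (y ∘ Sum.inl) * T (x ∘ Sum.inr) (y ∘ Sum.inr)

theorem tensorMul_smul (r : R) (S : MixedTensor ι κ R) (T : MixedTensor ι' κ R) :
    tensorMul S (r • T) = r • tensorMul S T := by
  ext x y
  exact mul_left_comm _ r _

variable [Fintype ι] [DecidableEq ι] [Fintype κ] [DecidableEq κ]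

theorem deltaContraction_prod_mul_prod_compl [Fintype σ] [DecidableEq σ]
    (S T : MixedTensor ι κ R) (t : Finset σ) :
    deltaContraction (fun x y : σ × ι → κ =>
      (∏ a ∈ t, S (fun i => x (a, i)) fun i => y (a, i)) *
        ∏ a ∈ tᶜ, T (fun i => x (a, i)) fun i => y (a, i)) =
      deltaContraction
        (tensorMul (tensorPow (Fin t.card) S) (tensorPow (Fin (Fintype.card σ - t.card)) T)) := by
  let inside : Fin t.card ≃ t := t.equivFin.symm
  let outside : Fin (Fintype.card σ - t.card) ≃ (tᶜ : Finset σ) :=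
    (tᶜ.equivFinOfCardEq t.card_compl).symm
  let e : Fin t.card ⊕ Fin (Fintype.card σ - t.card) ≃ σ :=
    (inside.sumCongr (outside.trans (Equiv.subtypeEquivRight fun _ => Finset.mem_compl))).trans
      (Equiv.sumCompl (· ∈ t))
  have prod_inside (f : σ → R) : ∏ a ∈ t, f a = ∏ a, f (e (Sum.inl a)) :=
    (Finset.prod_coe_sort t f).symm.trans (inside.prod_comp fun a => f a).symm
  have prod_outside (f : σ → R) : ∏ a ∈ tᶜ, f a = ∏ a, f (e (Sum.inr a)) :=
    (Finset.prod_coe_sort tᶜ f).symm.trans (outside.prod_comp fun a => f a).symm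
  refine deltaContraction_congr_equiv
    ((Equiv.sumProdDistrib _ _ ι).symm.trans (e.prodCongr (Equiv.refl ι))) fun x y => ?_
  rw [prod_inside, prod_outside]
  rfl

theorem deltaContraction_tensorPow_add [Fintype σ] [DecidableEq σ] (S T : MixedTensor ι κ R) :
    deltaContraction (tensorPow σ (S + T)) =
      ∑ ℓ ∈ range (Fintype.card σ + 1), (Fintype.card σ).choose ℓ *
        deltaContraction
          (tensorMul (tensorPow (Fin ℓ) S) (tensorPow (Fin (Fintype.card σ - ℓ)) T)) := by
  have expand : tensorPow σ (S + T) = ∑ t : Finset σ, fun x y =>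
      (∏ a ∈ t, S (fun i => x (a, i)) fun i => y (a, i)) *
        ∏ a ∈ tᶜ, T (fun i => x (a, i)) fun i => y (a, i) := by
    ext x y
    simp only [tensorPow, Pi.add_apply, Fintype.prod_add, Finset.sum_apply]
  rw [expand, map_sum]
  simp only [deltaContraction_prod_mul_prod_compl, ← nsmul_eq_mul]
  rw [← Finset.powerset_univ, ← Finset.card_univ]
  exact Finset.sum_powerset_apply_card fun ℓ => deltaContraction
    (tensorMul (tensorPow (Fin ℓ) S) (tensorPow (Fin (Finset.univ.card - ℓ)) T))

/-- The tensor `∏_b P_{j_b}^{i_b}` with slots labelled by `τ`. -/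
def matrixPow (τ : Type*) [Fintype τ] (P : Matrix κ κ R) : MixedTensor τ κ R :=
  fun x y => ∏ b, P (x b) (y b)

theorem deltaContraction_tensorMul_metric (T : MixedTensor ι κ R) :
    deltaContraction (tensorMul T (matrixPow Unit 1)) =
      (Fintype.card κ - Fintype.card ι) * deltaContraction T := by
  have sum_split (f : (ι ⊕ Unit → κ) → R) :
      ∑ x, f x = ∑ x : ι → κ, ∑ c, f (Sum.elim x fun _ => c) := by
    rw [← (Equiv.sumArrowEquivProdArrow ι Unit κ).symm.sum_comp, Fintype.sum_prod_type]
    exact Finset.sum_congr rfl fun x _ =>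
      Fintype.sum_equiv (Equiv.funUnique Unit κ) _ _ fun c => rfl
  have contract_slot (j i : ι → κ) :
      ∑ c, ∑ d, multiDelta R (Sum.elim j fun _ : Unit => c) (Sum.elim i fun _ : Unit => d) *
        tensorMul T (matrixPow Unit 1) (Sum.elim j fun _ => c) (Sum.elim i fun _ => d) =
      (Fintype.card κ - Fintype.card ι) * (multiDelta R j i * T j i) := by
    have value (c d : κ) : tensorMul T (matrixPow Unit 1) (Sum.elim j fun _ => c)
        (Sum.elim i fun _ => d) = T j i * if c = d then 1 else 0 :=
      congrArg (T j i * ·) ((Fintype.prod_unique _).trans Matrix.one_apply)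
    rw [← mul_assoc, ← sum_multiDelta_sumElim, Finset.sum_mul]
    simp only [value, mul_ite, mul_one, mul_zero, Finset.sum_ite_eq, Finset.mem_univ, if_true]
  simp only [deltaContraction_apply, sum_split, Finset.mul_sum]
  refine Finset.sum_congr rfl fun j _ => ?_
  rw [Finset.sum_comm]
  exact Finset.sum_congr rfl fun i _ => contract_slot j i

theorem deltaContraction_tensorMul_metricPow (T : MixedTensor ι κ R) (m : ℕ) :
    deltaContraction (tensorMul T (matrixPow (Fin m) 1)) =
      (descPochhammer R m).eval (Fintype.card κ - Fintype.card ι : R) * deltaContraction T := by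
  induction m with
  | zero =>
    rw [descPochhammer_zero, Polynomial.eval_one, one_mul]
    exact deltaContraction_congr_equiv (Equiv.sumEmpty ι (Fin 0)).symm fun x y => mul_one _
  | succ m ih =>
    have peel : deltaContraction (tensorMul T (matrixPow (Fin (m + 1)) 1)) =
        deltaContraction (tensorMul (tensorMul T (matrixPow (Fin m) 1)) (matrixPow Unit 1)) := by
      let last : Fin m ⊕ Unit ≃ Fin (m + 1) :=
        ((Equiv.refl (Fin m)).sumCongr (Equiv.ofUnique Unit (Fin 1))).trans finSumFinEquiv
      refine deltaContraction_congr_equiv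
        ((Equiv.sumAssoc ι (Fin m) Unit).trans ((Equiv.refl ι).sumCongr last)) fun x y => ?_
      simp only [tensorMul, matrixPow, Fin.prod_univ_castSucc, mul_assoc, Fintype.prod_unique]
      rfl
    rw [peel, deltaContraction_tensorMul_metric, ih, descPochhammer_succ_eval, Fintype.card_sum,
      Fintype.card_fin, Nat.cast_add]
    ring

end TensorMul

section KulkarniNomizu

variable {ι σ κ R : Type*} [CommRing R]

/-- The tensor `P_{j₁}^{i₁} Q_{j₂}^{i₂}`. -/
def matrixMul (P Q : Matrix κ κ R) : MixedTensor (Fin 2) κ R :=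
  fun x y => P (x 0) (y 0) * Q (x 1) (y 1)

/-- The Kulkarni–Nomizu product of two bilinear forms. -/
def kulkarniNomizu (P Q : Matrix κ κ R) : MixedTensor (Fin 2) κ R :=
  fun x y => P (x 0) (y 0) * Q (x 1) (y 1) - P (x 0) (y 1) * Q (x 1) (y 0) +
    P (x 1) (y 1) * Q (x 0) (y 0) - P (x 1) (y 0) * Q (x 0) (y 1)

theorem antisymmetrize_matrixMul (P Q : Matrix κ κ R) :
    antisymmetrize (matrixMul P Q) = kulkarniNomizu P Q := by
  have perms : (Finset.univ : Finset (Perm (Fin 2))) = {1, Equiv.swap 0 1} := by decide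
  have one_ne_swap : (1 : Perm (Fin 2)) ≠ Equiv.swap 0 1 := by decide
  ext x y
  simp only [antisymmetrize_apply, perms, Finset.sum_pair one_ne_swap]
  simp only [matrixMul, kulkarniNomizu, Equiv.Perm.sign_one, Equiv.Perm.sign_swap', zero_ne_one,
    if_false, Units.val_one, Units.val_neg, Int.cast_one, Int.cast_neg, Equiv.Perm.coe_one,
    Function.comp_apply, id_eq, Equiv.swap_apply_left, Equiv.swap_apply_right]
  ring

theorem antisymmetrize_kulkarniNomizu (P Q : Matrix κ κ R) :
    antisymmetrize (kulkarniNomizu P Q) = antisymmetrize ((4 : R) • matrixMul P Q) := by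
  rw [← antisymmetrize_matrixMul, antisymmetrize_antisymmetrize, map_smul, Fintype.card_fin]
  norm_num

variable [Fintype ι] [DecidableEq ι] [Fintype κ] [DecidableEq κ]

theorem deltaContraction_tensorMul_tensorPow_matrixMul [Fintype σ] [DecidableEq σ]
    (T : MixedTensor ι κ R) (P Q : Matrix κ κ R) :
    deltaContraction (tensorMul T (tensorPow σ (matrixMul P Q))) =
      deltaContraction (tensorMul (tensorMul T (matrixPow σ P)) (matrixPow σ Q)) := by
  let pairs : σ ⊕ σ ≃ σ × Fin 2 := (Equiv.boolProdEquivSum σ).symm.trans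
    ((Equiv.prodComm Bool σ).trans ((Equiv.refl σ).prodCongr finTwoEquiv.symm))
  refine deltaContraction_congr_equiv
    ((Equiv.sumAssoc ι σ σ).trans ((Equiv.refl ι).sumCongr pairs)) fun x y => ?_
  simp only [tensorMul, tensorPow, matrixMul, matrixPow, Finset.prod_mul_distrib, mul_assoc]
  rfl

/-- The contraction `δ^{j}_{i} W_{j₁j₂}^{i₁i₂} ⋯ W_{j_{2ℓ-1}j_{2ℓ}}^{i_{2ℓ-1}i_{2ℓ}}
P_{j_{2ℓ+1}}^{i_{2ℓ+1}} ⋯ P_{j_{2ℓ+m}}^{i_{2ℓ+m}}` with `ℓ` factors `W` and `m` factors `P`. -/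
def powerContraction (W : MixedTensor (Fin 2) κ R) (P : Matrix κ κ R) (ℓ m : ℕ) : R :=
  deltaContraction (tensorMul (tensorPow (Fin ℓ) W) (matrixPow (Fin m) P))

theorem deltaContraction_tensorPow_eq_powerContraction_zero (W : MixedTensor (Fin 2) κ R)
    (P : Matrix κ κ R) (k : ℕ) :
    deltaContraction (tensorPow (Fin k) W) = powerContraction W P k 0 :=
  (deltaContraction_congr_equiv (Equiv.sumEmpty (Fin k × Fin 2) (Fin 0)).symm
    fun _ _ => mul_one _).symm

theorem deltaContraction_tensorPow_add_kulkarniNomizu_one [IsDomain R] [CharZero R]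
    (W : MixedTensor (Fin 2) κ R) (P : Matrix κ κ R) (k : ℕ) :
    deltaContraction (tensorPow (Fin k) (W + kulkarniNomizu P 1)) =
      ∑ ℓ ∈ range (k + 1), k.choose ℓ * (4 ^ (k - ℓ) *
        ((descPochhammer R (k - ℓ)).eval (Fintype.card κ - (ℓ * 2 + (k - ℓ : ℕ)) : R) *
          powerContraction W P ℓ (k - ℓ))) := by
  have same_antisymmetrization : antisymmetrize (W + kulkarniNomizu P 1) =
      antisymmetrize (W + (4 : R) • matrixMul P 1) := by
    rw [map_add, map_add, antisymmetrize_kulkarniNomizu]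
  rw [deltaContraction_tensorPow_congr same_antisymmetrization, deltaContraction_tensorPow_add,
    Fintype.card_fin]
  refine Finset.sum_congr rfl fun ℓ _ => ?_
  rw [tensorPow_smul, tensorMul_smul, map_smul, deltaContraction_tensorMul_tensorPow_matrixMul,
    deltaContraction_tensorMul_metricPow, powerContraction]
  simp

end KulkarniNomizu

section OrthonormalFrame

variable {n k : ℕ}

theorem kron_eq_one_apply (i j : Fin n) : kron i j = (1 : Matrix (Fin n) (Fin n) ℝ) i j :=
  Matrix.one_apply.symm

theorem gdelta_eq_multiDelta {m : ℕ} (j i : Fin m → Fin n) : gdelta j i = multiDelta ℝ j i := by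
  simp only [gdelta, kron_eq_one_apply]
  rfl

theorem sum_gdelta_cons {m : ℕ} (j i : Fin m → Fin n) :
    ∑ c, gdelta (Fin.cons c j : Fin (m + 1) → Fin n) (Fin.cons c i) = (n - m) * gdelta j i := by
  let e : Fin (m + 1) ≃ Fin m ⊕ Unit := (finSuccEquiv m).trans (Equiv.optionEquivSumPUnit (Fin m))
  have cons_eq (c : Fin n) (x : Fin m → Fin n) :
      (Fin.cons c x : Fin (m + 1) → Fin n) = Sum.elim x (fun _ : Unit => c) ∘ e := by
    ext a
    refine Fin.cases ?_ (fun b => ?_) a <;> simp [e]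
  simp only [gdelta_eq_multiDelta, cons_eq, multiDelta_comp_equiv, sum_multiDelta_sumElim,
    Fintype.card_fin]

/-- A four-index array `A_{ab}^{cd}` as a tensor with two lower and two upper slots. -/
def pairTensor (A : Fin n → Fin n → Fin n → Fin n → ℝ) : MixedTensor (Fin 2) (Fin n) ℝ :=
  fun x y => A (x 0) (x 1) (y 0) (y 1)

theorem pairTensor_add_kulkarniNomizu (W : Fin n → Fin n → Fin n → Fin n → ℝ)
    (P : Fin n → Fin n → ℝ) :
    pairTensor (fun i j a b => W i j a b + P i a * kron j b - P i b * kron j a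
      + P j b * kron i a - P j a * kron i b) = pairTensor W + kulkarniNomizu (Matrix.of P) 1 := by
  ext x y
  simp only [pairTensor, kulkarniNomizu, kron_eq_one_apply, Pi.add_apply, Matrix.of_apply]
  ring

theorem PfA_eq_deltaContraction (A : Fin n → Fin n → Fin n → Fin n → ℝ) :
    PfA (k := k) A = 1 / k ! * deltaContraction (tensorPow (Fin k) (pairTensor A)) := by
  let e : Fin k × Fin 2 ≃ Fin (2 * k) := finProdFinEquiv.trans (finCongr (mul_comm k 2))
  have d0_eq (a : Fin k) : d0 a = e (a, 0) := Fin.ext (by simp [d0, e])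
  have d1_eq (a : Fin k) : d1 a = e (a, 1) := Fin.ext (by simp [d1, e, add_comm])
  simp only [PfA, gdelta_eq_multiDelta, d0_eq, d1_eq]
  exact congrArg _ (deltaContraction_congr_equiv e fun _ _ => rfl)

theorem PfA_eq_powerContraction (W : Fin n → Fin n → Fin n → Fin n → ℝ)
    (P : Fin n → Fin n → ℝ) :
    PfA (k := k) W = 1 / k ! * powerContraction (pairTensor W) (Matrix.of P) k 0 := by
  rw [PfA_eq_deltaContraction, deltaContraction_tensorPow_eq_powerContraction_zero]

theorem powerContraction_pairTensor {ℓ m N : ℕ} (hN : 2 * ℓ + m = N)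
    (W : Fin n → Fin n → Fin n → Fin n → ℝ) (P : Fin n → Fin n → ℝ) :
    powerContraction (pairTensor W) (Matrix.of P) ℓ m =
      ∑ js : Fin N → Fin n, ∑ is : Fin N → Fin n, gdelta js is *
        ((∏ a : Fin ℓ, W (js ⟨2 * a, by omega⟩) (js ⟨2 * a + 1, by omega⟩)
            (is ⟨2 * a, by omega⟩) (is ⟨2 * a + 1, by omega⟩)) *
          ∏ b : Fin m, P (js ⟨2 * ℓ + b, by omega⟩) (is ⟨2 * ℓ + b, by omega⟩)) := by
  let e : (Fin ℓ × Fin 2) ⊕ Fin m ≃ Fin N :=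
    (finProdFinEquiv.sumCongr (Equiv.refl _)).trans
      (finSumFinEquiv.trans (finCongr (mul_comm ℓ 2 ▸ hN)))
  have first_eq (a : Fin ℓ) (h) : (⟨2 * a, h⟩ : Fin N) = e (Sum.inl (a, 0)) :=
    Fin.ext (by simp [e])
  have second_eq (a : Fin ℓ) (h) : (⟨2 * a + 1, h⟩ : Fin N) = e (Sum.inl (a, 1)) :=
    Fin.ext (by simp [e, add_comm])
  have single_eq (b : Fin m) (h) : (⟨2 * ℓ + b, h⟩ : Fin N) = e (Sum.inr b) :=
    Fin.ext (by simp [e, mul_comm])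
  simp only [gdelta_eq_multiDelta, first_eq, second_eq, single_eq]
  exact (deltaContraction_congr_equiv e fun _ _ => rfl).symm

theorem trace_OmegaT (W : Fin n → Fin n → Fin n → Fin n → ℝ) (P : Fin n → Fin n → ℝ) :
    ∑ i, OmegaT (k := k) W P i i = ∑ ℓ : Fin k, (4 : ℝ) ^ (k - ℓ.val) *
      (1 / (ℓ.val ! * (k - ℓ.val))) *
        ((n - (k + ℓ.val : ℕ)) * powerContraction (pairTensor W) (Matrix.of P) ℓ (k - ℓ)) := by
  simp only [OmegaT]
  rw [Finset.sum_comm]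
  refine Finset.sum_congr rfl fun ℓ _ => ?_
  have slots : 2 * ℓ.val + (k - ℓ.val) = k + ℓ.val := by omega
  rw [← Finset.mul_sum, powerContraction_pairTensor slots]
  congr 1
  rw [Finset.sum_comm, Finset.mul_sum]
  refine Finset.sum_congr rfl fun js _ => ?_
  rw [Finset.sum_comm, Finset.mul_sum]
  refine Finset.sum_congr rfl fun is _ => ?_
  simp only [mul_assoc]
  rw [← Finset.sum_mul, sum_gdelta_cons, mul_assoc]

end OrthonormalFrame

theorem PfA_add_kulkarniNomizu (k : ℕ)
    (W : Fin (2 * k) → Fin (2 * k) → Fin (2 * k) → Fin (2 * k) → ℝ)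
    (P : Fin (2 * k) → Fin (2 * k) → ℝ) :
    PfA (k := k) (fun i j a b => W i j a b + P i a * kron j b - P i b * kron j a
      + P j b * kron i a - P j a * kron i b) =
      ∑ ℓ ∈ range (k + 1), 4 ^ (k - ℓ) * (1 / ℓ !) *
        powerContraction (pairTensor W) (Matrix.of P) ℓ (k - ℓ) := by
  rw [PfA_eq_deltaContraction, pairTensor_add_kulkarniNomizu,
    deltaContraction_tensorPow_add_kulkarniNomizu_one, Finset.mul_sum]
  refine Finset.sum_congr rfl fun ℓ hℓ => ?_
  have hℓk : ℓ ≤ k := Finset.mem_range_succ_iff.mp hℓ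
  have free_indices : (Fintype.card (Fin (2 * k)) - (ℓ * 2 + (k - ℓ : ℕ)) : ℝ) = (k - ℓ : ℕ) := by
    rw [Fintype.card_fin]
    push_cast [hℓk]
    ring
  rw [free_indices, descPochhammer_eval_eq_descFactorial, Nat.descFactorial_self,
    Nat.cast_choose ℝ hℓk]
  field_simp

theorem trace_Omega_general (k : ℕ)
    (W : Fin (2 * k) → Fin (2 * k) → Fin (2 * k) → Fin (2 * k) → ℝ)
    (P : Fin (2 * k) → Fin (2 * k) → ℝ) :
    ∑ i, OmegaT (k := k) W P i i
      = PfA (k := k) (fun i j a b => W i j a b + P i a * kron j b - P i b * kron j a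
          + P j b * kron i a - P j a * kron i b)
        - PfA (k := k) W := by
  rw [trace_OmegaT, PfA_add_kulkarniNomizu, PfA_eq_powerContraction W P, Finset.sum_range_succ,
    Finset.sum_range, Nat.sub_self, pow_zero, one_mul, add_sub_cancel_right]
  refine Finset.sum_congr rfl fun ℓ _ => ?_
  have hℓ : (k - ℓ.val : ℝ) ≠ 0 := sub_ne_zero.mpr (Nat.cast_injective.ne ℓ.isLt.ne')
  have free_indices : ((2 * k : ℕ) - (k + ℓ.val : ℕ) : ℝ) = k - ℓ.val := by
    push_cast
    ring
  rw [free_indices]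
  field_simp

/-- in dimension `n = 2k`, `tr Ω^{(k)} = Pf^{(k)}(Rm) − Pf^{(k)}(W)`,
where `R = W + P ⩕ g` is the decomposition of the Riemann tensor into its Weyl part
and the Kulkarni–Nomizu product of the Schouten tensor with the metric. -/
theorem trace_Omega (k : ℕ)
    (W : Fin (2 * k) → Fin (2 * k) → Fin (2 * k) → Fin (2 * k) → ℝ)
    (hW1 : ∀ a b c d, W a b c d = - W b a c d)
    (hW2 : ∀ a b c d, W a b c d = - W a b d c)
    (hW3 : ∀ a b c d, W a b c d = W c d a b)
    (hWB : ∀ a b c d, W a b c d + W b c a d + W c a b d = 0)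
    (hWtf : ∀ a c, ∑ s, W a s c s = 0)
    (P : Fin (2 * k) → Fin (2 * k) → ℝ) (hP : ∀ i j, P i j = P j i) :
    ∑ i, OmegaT (k := k) W P i i
      = PfA (k := k) (fun i j a b => W i j a b + P i a * kron j b - P i b * kron j a
          + P j b * kron i a - P j a * kron i b)
        - PfA (k := k) W :=
  trace_Omega_general k W P
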